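/- Let S be a finite set of points in ℝ². Then S has infinite order under T (i.e., the sequence T⁰(S), T¹(S), T²(S), … never stabilizes) if and only if the union ⋃_{i ≥ 0} Tⁱ(S) is dense in ℝ². -/

import Mathlib

/-
The orbit `U = ⋃ i, Tⁱ(S)` of a set of infinite order is infinite and closed under `T`. Since the
intersection point of two non-parallel lines depends continuously on the points spanning them, the
closure `K` of `U` is closed under `T` as well, and we must show that `K` is the whole plane.

A point `m ∈ T(S) \ S` lies on two lines, each carrying two points of `S` different from `m`. If on
each of the lines these two points lie on opposite sides of `m`, a further point of `K` is needed,
and there is one because `K` is infinite; in all cases `K` contains a triangle together with a point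
in its interior. On a side of such a triangle, a complete quadrilateral turns two points of `K` at
distances `p` and `q` from a vertex into a point of `K` at distance the harmonic mean of `p` and
`q`. So `K`, being topologically closed, has no gaps there and contains a segment of that side.
Joining the points of two such segments to the opposite vertices fills an open set, and every point
of the plane is the intersection of two lines that each meet this open set in two points.
-/

open Set Filter

noncomputable section

/-- The line through two points in the plane `ℝ × ℝ`. -/
def line (a b : ℝ × ℝ) : AffineSubspace ℝ (ℝ × ℝ) := affineSpan ℝ {a, b}

/-- The intersection operation `T`: the set of all intersection points of pairs of
distinct lines through pairs of distinct points of `S`. -/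
def interT (S : Set (ℝ × ℝ)) : Set (ℝ × ℝ) :=
  {x | ∃ a ∈ S, ∃ b ∈ S, ∃ c ∈ S, ∃ d ∈ S,
    a ≠ b ∧ c ≠ d ∧ line a b ≠ line c d ∧ x ∈ line a b ∧ x ∈ line c d}

lemma Icc_subset_of_isClosed_of_nonempty_inter_Ioo {α : Type*} [ConditionallyCompleteLinearOrder α]
    [TopologicalSpace α] [OrderTopology α] {s : Set α} {a b : α} (hs : IsClosed s) (ha : a ∈ s)
    (hb : b ∈ s) (h : ∀ x ∈ s, ∀ y ∈ s, a ≤ x → x < y → y ≤ b → (s ∩ Ioo x y).Nonempty) :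
    Icc a b ⊆ s := by
  rintro t ⟨hat, htb⟩
  by_contra ht
  obtain ⟨l, ⟨hls, hal, hlt⟩, hl⟩ :=
    (isCompact_Icc.inter_left hs).exists_isGreatest ⟨a, ha, le_refl a, hat⟩
  obtain ⟨r, ⟨hrs, htr, hrb⟩, hr⟩ :=
    (isCompact_Icc.inter_left hs).exists_isLeast ⟨b, hb, htb, le_refl b⟩
  have hlt' : l < t := hlt.lt_of_ne (by rintro rfl; exact ht hls)
  obtain ⟨z, hzs, hlz, hzr⟩ := h l hls r hrs hal (hlt'.trans_le htr) hrb
  rcases le_total z t with hzt | htz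
  · exact hlz.not_ge (hl ⟨hzs, hal.trans hlz.le, hzt⟩)
  · exact hzr.not_ge (hr ⟨hzs, htz, hzr.le.trans hrb⟩)

lemma mul_self_lt_mul_of_mul_le {R : Type*} [CommRing R] [LinearOrder R] [IsStrictOrderedRing R]
    {u v : R} (hne : u ≠ v) (huv : 0 < u * v) (h : u * v ≤ v * v) : u * u < v * u := by
  nlinarith [mul_pos huv (sq_pos_of_ne_zero (sub_ne_zero.2 hne))]

/-- The planar cross product of two vectors, zero exactly when they are parallel. -/
def cross (u v : ℝ × ℝ) : ℝ := u.1 * v.2 - u.2 * v.1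

lemma exists_eq_smul_of_cross_eq_zero {u v : ℝ × ℝ} (hu : u ≠ 0) (h : cross u v = 0) :
    ∃ r : ℝ, v = r • u := by
  have hnorm : u.1 ^ 2 + u.2 ^ 2 ≠ 0 := fun h₀ =>
    hu (Prod.ext_iff.2 (mul_self_add_mul_self_eq_zero.1 (by simpa only [sq] using h₀)))
  refine ⟨(u.1 * v.1 + u.2 * v.2) / (u.1 ^ 2 + u.2 ^ 2), Prod.ext ?_ ?_⟩ <;>
    simp only [cross, Prod.smul_fst, Prod.smul_snd, smul_eq_mul] at h ⊢ <;> field_simp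
  · linear_combination -u.2 * h
  · linear_combination u.1 * h

lemma exists_eq_add_smul_of_cross_eq_zero {a b x : ℝ × ℝ} (hax : a ≠ x)
    (h : cross (b - a) (x - a) = 0) : ∃ t : ℝ, b = x + t • (a - x) := by
  have hcross : cross (a - x) (b - x) = 0 := by
    simp only [cross, Prod.fst_sub, Prod.snd_sub] at h ⊢
    linear_combination h
  obtain ⟨t, ht⟩ := exists_eq_smul_of_cross_eq_zero (sub_ne_zero.2 hax) hcross
  exact ⟨t, by rw [← ht, add_sub_cancel]⟩

lemma cross_eq_zero_trans {u v w : ℝ × ℝ} (hv : v ≠ 0) (huv : cross u v = 0)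
    (hvw : cross v w = 0) : cross u w = 0 := by
  obtain ⟨r, rfl⟩ := exists_eq_smul_of_cross_eq_zero hv hvw
  simp only [cross, Prod.smul_fst, Prod.smul_snd, smul_eq_mul] at huv ⊢
  linear_combination r * huv

lemma mem_line_iff_cross_eq_zero {a b : ℝ × ℝ} (hab : a ≠ b) (x : ℝ × ℝ) :
    x ∈ line a b ↔ cross (b - a) (x - a) = 0 := by
  rw [line, mem_affineSpan_pair_iff_exists_lineMap_eq]
  constructor
  · rintro ⟨r, rfl⟩
    simp only [cross, AffineMap.lineMap_apply_module', Prod.fst_add, Prod.snd_add, Prod.fst_sub,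
      Prod.snd_sub, Prod.smul_fst, Prod.smul_snd, smul_eq_mul]
    ring
  · intro h
    obtain ⟨r, hr⟩ := exists_eq_smul_of_cross_eq_zero (sub_ne_zero.2 hab.symm) h
    exact ⟨r, by simp [AffineMap.lineMap_apply, ← hr]⟩

lemma line_eq_of_mem {a b p q : ℝ × ℝ} (hp : p ∈ line a b) (hq : q ∈ line a b) (h : p ≠ q) :
    line p q = line a b :=
  affineSpan_pair_eq_of_mem_of_mem_of_ne hp hq h

lemma line_ne_line_iff {a b c d x : ℝ × ℝ} (hab : a ≠ b) (hcd : c ≠ d) (hx : x ∈ line a b)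
    (hx' : x ∈ line c d) : line a b ≠ line c d ↔ cross (b - a) (d - c) ≠ 0 := by
  rw [mem_line_iff_cross_eq_zero hab] at hx
  rw [mem_line_iff_cross_eq_zero hcd] at hx'
  refine not_congr ⟨fun h => ?_, fun h => ?_⟩
  · have hc := (mem_line_iff_cross_eq_zero hab c).1 (h ▸ left_mem_affineSpan_pair ℝ c d)
    have hd := (mem_line_iff_cross_eq_zero hab d).1 (h ▸ right_mem_affineSpan_pair ℝ c d)
    simp only [cross, Prod.fst_sub, Prod.snd_sub] at hc hd ⊢
    linear_combination hd - hc
  · have hxc := cross_eq_zero_trans (sub_ne_zero.2 hcd.symm) h hx'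
    refine (line_eq_of_mem ?_ ?_ hcd).symm <;> rw [mem_line_iff_cross_eq_zero hab] <;>
      simp only [cross, Prod.fst_sub, Prod.snd_sub] at hx hxc h ⊢
    · linear_combination hx - hxc
    · linear_combination hx - hxc + h

lemma mem_interT_iff {S : Set (ℝ × ℝ)} {x : ℝ × ℝ} :
    x ∈ interT S ↔ ∃ a ∈ S, ∃ b ∈ S, ∃ c ∈ S, ∃ d ∈ S, cross (b - a) (d - c) ≠ 0 ∧
      cross (b - a) (x - a) = 0 ∧ cross (d - c) (x - c) = 0 := by
  constructor
  · rintro ⟨a, ha, b, hb, c, hc, d, hd, hab, hcd, hne, hx, hx'⟩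
    exact ⟨a, ha, b, hb, c, hc, d, hd, (line_ne_line_iff hab hcd hx hx').1 hne,
      (mem_line_iff_cross_eq_zero hab x).1 hx, (mem_line_iff_cross_eq_zero hcd x).1 hx'⟩
  · rintro ⟨a, ha, b, hb, c, hc, d, hd, hne, hx, hx'⟩
    have hab : a ≠ b := by rintro rfl; simp [cross] at hne
    have hcd : c ≠ d := by rintro rfl; simp [cross] at hne
    rw [← mem_line_iff_cross_eq_zero hab] at hx
    rw [← mem_line_iff_cross_eq_zero hcd] at hx'
    exact ⟨a, ha, b, hb, c, hc, d, hd, hab, hcd, (line_ne_line_iff hab hcd hx hx').2 hne, hx, hx'⟩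

lemma interT_empty : interT ∅ = ∅ := by
  ext x
  simp [interT]

lemma interT_mono : Monotone interT := by
  rintro S S' h x ⟨a, ha, b, hb, c, hc, d, hd, hx⟩
  exact ⟨a, h ha, b, h hb, c, h hc, d, h hd, hx⟩

lemma subset_interT_of_nonempty {S : Set (ℝ × ℝ)} (h : (interT S).Nonempty) : S ⊆ interT S := by
  obtain ⟨x, hx⟩ := h
  obtain ⟨a, ha, b, hb, c, hc, d, hd, hne, -, -⟩ := mem_interT_iff.1 hx
  intro p hp
  obtain ⟨q, hq, r, hr, hqr⟩ : ∃ q ∈ S, ∃ r ∈ S, cross (q - p) (r - p) ≠ 0 := by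
    by_contra! hcol
    apply hne
    have hac := hcol a ha c hc
    have had := hcol a ha d hd
    have hbc := hcol b hb c hc
    have hbd := hcol b hb d hd
    simp only [cross, Prod.fst_sub, Prod.snd_sub] at hac had hbc hbd ⊢
    linear_combination hbd - hbc - had + hac
  exact mem_interT_iff.2 ⟨p, hp, q, hq, p, hp, r, hr, hqr, by simp [cross], by simp [cross]⟩

/-- The intersection point of the lines `ab` and `cd`. For parallel lines the quotient is `0`, so
the value is then `a`. -/
def interPoint (a b c d : ℝ × ℝ) : ℝ × ℝ :=
  a + (cross (c - a) (d - c) / cross (b - a) (d - c)) • (b - a)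

lemma eq_interPoint {a b c d x : ℝ × ℝ} (h : cross (b - a) (d - c) ≠ 0)
    (hab : cross (b - a) (x - a) = 0) (hcd : cross (d - c) (x - c) = 0) :
    x = interPoint a b c d := by
  apply Prod.ext <;>
    simp only [interPoint, Prod.fst_add, Prod.snd_add, Prod.smul_fst, Prod.smul_snd, Prod.fst_sub,
      Prod.snd_sub, smul_eq_mul] <;>
    field_simp <;> simp only [cross, Prod.fst_sub, Prod.snd_sub] at hab hcd ⊢
  · linear_combination (d.1 - c.1) * hab - (b.1 - a.1) * hcd
  · linear_combination (d.2 - c.2) * hab - (b.2 - a.2) * hcd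

lemma interPoint_spec {a b c d : ℝ × ℝ} (h : cross (b - a) (d - c) ≠ 0) :
    cross (b - a) (interPoint a b c d - a) = 0 ∧ cross (d - c) (interPoint a b c d - c) = 0 := by
  have hs := div_mul_cancel₀ (cross (c - a) (d - c)) h
  unfold interPoint
  generalize cross (c - a) (d - c) / cross (b - a) (d - c) = s at hs ⊢
  simp only [cross, Prod.fst_add, Prod.snd_add, Prod.smul_fst, Prod.smul_snd, Prod.fst_sub,
    Prod.snd_sub, smul_eq_mul] at hs ⊢
  constructor
  · ring
  · linear_combination -hs

lemma interT_finite {S : Set (ℝ × ℝ)} (hS : S.Finite) : (interT S).Finite := by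
  have hsub : interT S ⊆ (fun p : ((ℝ × ℝ) × ℝ × ℝ) × (ℝ × ℝ) × ℝ × ℝ =>
      interPoint p.1.1 p.1.2 p.2.1 p.2.2) '' ((S ×ˢ S) ×ˢ S ×ˢ S) := by
    intro x hx
    obtain ⟨a, ha, b, hb, c, hc, d, hd, h, hab, hcd⟩ := mem_interT_iff.1 hx
    exact ⟨((a, b), c, d), ⟨⟨ha, hb⟩, hc, hd⟩, (eq_interPoint h hab hcd).symm⟩
  exact (((hS.prod hS).prod (hS.prod hS)).image _).subset hsub

/-- Sets containing every intersection point of two distinct lines spanned by their points. -/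
def IsInterClosed (K : Set (ℝ × ℝ)) : Prop := interT K ⊆ K

namespace IsInterClosed

variable {K : Set (ℝ × ℝ)}

lemma mem (hK : IsInterClosed K) {a b c d x : ℝ × ℝ} (ha : a ∈ K) (hb : b ∈ K) (hc : c ∈ K)
    (hd : d ∈ K) (h : cross (b - a) (d - c) ≠ 0) (hab : cross (b - a) (x - a) = 0)
    (hcd : cross (d - c) (x - c) = 0) : x ∈ K :=
  hK (mem_interT_iff.2 ⟨a, ha, b, hb, c, hc, d, hd, h, hab, hcd⟩)

lemma interPoint_mem (hK : IsInterClosed K) {a b c d : ℝ × ℝ} (ha : a ∈ K) (hb : b ∈ K)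
    (hc : c ∈ K) (hd : d ∈ K) : interPoint a b c d ∈ K := by
  by_cases h : cross (b - a) (d - c) = 0
  · simpa [interPoint, h] using ha
  · exact hK.mem ha hb hc hd h (interPoint_spec h).1 (interPoint_spec h).2

protected lemma closure (hK : IsInterClosed K) : IsInterClosed (closure K) := by
  intro x hx
  obtain ⟨a, ha, b, hb, c, hc, d, hd, h, hab, hcd⟩ := mem_interT_iff.1 hx
  let f : ((ℝ × ℝ) × ℝ × ℝ) × (ℝ × ℝ) × ℝ × ℝ → ℝ × ℝ :=
    fun p => interPoint p.1.1 p.1.2 p.2.1 p.2.2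
  have hf : ContinuousAt f ((a, b), c, d) := by
    unfold f interPoint cross
    unfold cross at h
    fun_prop (disch := exact h)
  have hmem : ((a, b), c, d) ∈ closure ((K ×ˢ K) ×ˢ K ×ˢ K) := by
    simp only [closure_prod_eq]
    exact ⟨⟨ha, hb⟩, hc, hd⟩
  rw [eq_interPoint h hab hcd]
  exact hf.continuousWithinAt.mem_closure hmem
    fun p hp => hK.interPoint_mem hp.1.1 hp.1.2 hp.2.1 hp.2.2

lemma iUnion_iterate {S : Set (ℝ × ℝ)} (hmono : Monotone fun i => interT^[i] S) :
    IsInterClosed (⋃ i, interT^[i] S) := by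
  rintro x ⟨a, ha, b, hb, c, hc, d, hd, hx⟩
  simp only [mem_iUnion] at ha hb hc hd ⊢
  obtain ⟨⟨i, ha⟩, ⟨j, hb⟩, ⟨k, hc⟩, ⟨l, hd⟩⟩ := And.intro ha (And.intro hb (And.intro hc hd))
  refine ⟨i + j + k + l + 1, ?_⟩
  rw [Function.iterate_succ_apply']
  exact ⟨a, hmono (by lia) ha, b, hmono (by lia) hb, c, hmono (by lia) hc,
    d, hmono (by lia) hd, hx⟩

lemma eq_univ_of_interior_nonempty (hK : IsInterClosed K) (hne : (interior K).Nonempty) :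
    K = univ := by
  obtain ⟨o, ho⟩ := hne
  refine eq_univ_of_forall fun y => by_contra fun hy => ?_
  let n : ℝ × ℝ := (-(y - o).2, (y - o).1)
  have hn : cross (y - o) n ≠ 0 := by
    intro h
    have hyo : y - o = 0 := by
      rw [cross, mul_neg, sub_neg_eq_add, mul_self_add_mul_self_eq_zero] at h
      exact Prod.ext_iff.2 h
    exact hy (sub_eq_zero.1 hyo ▸ interior_subset ho)
  have hnear : ∀ f : ℝ → ℝ × ℝ, Continuous f → f 0 = o → ∀ᶠ ε in nhds 0, f ε ∈ K := by
    intro f hf h0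
    exact hf.continuousAt.eventually (by rw [h0]; exact mem_interior_iff_mem_nhds.1 ho)
  have hb := hnear (fun ε => o + ε • (y - o)) (by fun_prop) (by simp)
  have hc := hnear (fun ε => o + ε • n) (by fun_prop) (by simp)
  have hd := hnear (fun ε => o + ε • n + ε • (y - (o + ε • n))) (by fun_prop) (by simp)
  obtain ⟨ε, ⟨hb, hc, hd⟩, hε : ε ≠ 0⟩ :=
    ((((hb.and (hc.and hd)).filter_mono nhdsWithin_le_nhds).and
      (self_mem_nhdsWithin (s := {0}ᶜ))).exists)
  refine hy (hK.mem (interior_subset ho) hb hc hd ?_ ?_ ?_)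
  · have heq : cross (o + ε • (y - o) - o) (o + ε • n + ε • (y - (o + ε • n)) - (o + ε • n)) =
        -ε ^ 3 * cross (y - o) n := by
      simp only [cross, Prod.fst_add, Prod.snd_add, Prod.fst_sub, Prod.snd_sub, Prod.smul_fst,
        Prod.smul_snd, smul_eq_mul]
      ring
    rw [heq]
    exact mul_ne_zero (neg_ne_zero.2 (pow_ne_zero 3 hε)) hn
  · simp only [cross, Prod.fst_add, Prod.snd_add, Prod.fst_sub, Prod.snd_sub, Prod.smul_fst,
      Prod.smul_snd, smul_eq_mul]
    ring
  · simp only [cross, Prod.fst_add, Prod.snd_add, Prod.fst_sub, Prod.snd_sub, Prod.smul_fst,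
      Prod.smul_snd, smul_eq_mul]
    ring

end IsInterClosed

/-- The point with affine coordinates `p` with respect to the origin `o` and the directions `u`
and `v`. -/
def frame (o u v p : ℝ × ℝ) : ℝ × ℝ := o + p.1 • u + p.2 • v

lemma continuous_frame (o u v : ℝ × ℝ) : Continuous (frame o u v) := by
  unfold frame
  fun_prop

lemma cross_frame (o u v a b c d : ℝ × ℝ) :
    cross (frame o u v b - frame o u v a) (frame o u v d - frame o u v c) =
      cross u v * cross (b - a) (d - c) := by
  simp only [frame, cross, Prod.fst_add, Prod.snd_add, Prod.fst_sub, Prod.snd_sub, Prod.smul_fst,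
    Prod.smul_snd, smul_eq_mul]
  ring

lemma frame_surjective (o : ℝ × ℝ) {u v : ℝ × ℝ} (h : cross u v ≠ 0) :
    Function.Surjective (frame o u v) := by
  refine fun x => ⟨(cross (x - o) v / cross u v, cross u (x - o) / cross u v), ?_⟩
  apply Prod.ext <;>
    simp only [frame, Prod.fst_add, Prod.snd_add, Prod.smul_fst, Prod.smul_snd, smul_eq_mul] <;>
    field_simp <;> simp only [cross, Prod.fst_sub, Prod.snd_sub] <;> ring

namespace IsInterClosed

variable {K : Set (ℝ × ℝ)}

lemma preimage_frame (hK : IsInterClosed K) {o u v : ℝ × ℝ} (h : cross u v ≠ 0) :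
    IsInterClosed (frame o u v ⁻¹' K) := by
  intro x hx
  obtain ⟨a, ha, b, hb, c, hc, d, hd, hne, hab, hcd⟩ := mem_interT_iff.1 hx
  exact hK.mem ha hb hc hd (by rw [cross_frame]; exact mul_ne_zero h hne)
    (by rw [cross_frame, hab, mul_zero]) (by rw [cross_frame, hcd, mul_zero])

lemma preimage_swap (hK : IsInterClosed K) : IsInterClosed (Prod.swap ⁻¹' K) := by
  have hswap : Prod.swap = frame (0 : ℝ × ℝ) (0, 1) (1, 0) := by
    ext p <;> simp [frame]
  rw [hswap]
  exact hK.preimage_frame (by simp [cross])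

lemma cevian_mem (hK : IsInterClosed K) {σ τ p : ℝ} (h₀ : (0, 0) ∈ K) (h₁ : (0, 1) ∈ K)
    (hd : (σ, τ) ∈ K) (hp : (p, 0) ∈ K) (h : σ + p * τ ≠ 0) :
    (p * σ / (σ + p * τ), p * τ / (σ + p * τ)) ∈ K := by
  refine hK.mem h₀ hd h₁ hp ?_ ?_ ?_ <;> simp only [cross, Prod.mk_sub_mk, sub_zero, zero_sub]
  · contrapose! h
    linear_combination -h
  · field_simp
    ring
  · field_simp
    ring

lemma harmonicMean_mem (hK : IsInterClosed K) {σ τ p q : ℝ} (h₀ : (0, 0) ∈ K) (h₁ : (0, 1) ∈ K)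
    (hd : (σ, τ) ∈ K) (hp : (p, 0) ∈ K) (hq : (q, 0) ∈ K) (hσ : 0 < σ) (hτ : 0 < τ) (hp₀ : 0 < p)
    (hpq : p < q) : (2 * p * q / (p + q), 0) ∈ K := by
  have hq₀ : 0 < q := hp₀.trans hpq
  have hp' := hK.cevian_mem h₀ h₁ hd hp (by positivity)
  have hq' := hK.cevian_mem h₀ h₁ hd hq (by positivity)
  have hdiag : (2 * p * q * σ / ((p + q) * σ + p * q * τ), p * q * τ / ((p + q) * σ + p * q * τ))
      ∈ K := by
    refine hK.mem hp hq' hq hp' ?_ ?_ ?_ <;> simp only [cross, Prod.mk_sub_mk, sub_zero]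
    · have heq : (q * σ / (σ + q * τ) - p) * (p * τ / (σ + p * τ)) -
          q * τ / (σ + q * τ) * (p * σ / (σ + p * τ) - q) =
          τ * (q - p) * ((p + q) * σ + p * q * τ) / ((σ + q * τ) * (σ + p * τ)) := by
        field_simp
        ring
      rw [heq]
      have := sub_pos.2 hpq
      positivity
    · field_simp
      ring
    · field_simp
      ring
  refine hK.mem h₀ hp h₁ hdiag ?_ ?_ ?_ <;>
    simp only [cross, Prod.mk_sub_mk, sub_zero, zero_sub, zero_mul, mul_zero]
  · have heq : p * (p * q * τ / ((p + q) * σ + p * q * τ) - 1) =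
        -(p * (p + q) * σ / ((p + q) * σ + p * q * τ)) := by
      field_simp
      ring
    rw [heq]
    exact (neg_neg_of_pos (by positivity)).ne
  · field_simp
    ring

lemma segment_mem (hK : IsInterClosed K) (hc : IsClosed K) {σ τ X : ℝ} (h₀ : (0, 0) ∈ K)
    (h₁ : (1, 0) ∈ K) (h₂ : (0, 1) ∈ K) (hd : (σ, τ) ∈ K) (hσ : 0 < σ) (hτ : 0 < τ)
    (hστ : σ + τ < 1) (hX : X ∈ Icc (σ / (1 - τ)) 1) : (X, 0) ∈ K := by
  have hτ' : 0 < 1 - τ := by linarith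
  have hfoot : (σ / (1 - τ), 0) ∈ K := by
    refine hK.mem h₀ h₁ h₂ hd ?_ ?_ ?_ <;> simp only [cross, Prod.mk_sub_mk, sub_zero]
    · linarith
    · ring
    · field_simp
      ring
  have hclosed : IsClosed {x : ℝ | (x, (0 : ℝ)) ∈ K} := hc.preimage (by fun_prop)
  refine Icc_subset_of_isClosed_of_nonempty_inter_Ioo hclosed hfoot h₁ ?_ hX
  rintro p hp q hq hfp hpq -
  have hp₀ : 0 < p := (div_pos hσ hτ').trans_le hfp
  have hsum : 0 < p + q := by linarith
  refine ⟨2 * p * q / (p + q), hK.harmonicMean_mem h₀ h₂ hd hp hq hσ hτ hp₀ hpq, ?_, ?_⟩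
  · rw [lt_div_iff₀ hsum]
    nlinarith
  · rw [div_lt_iff₀ hsum]
    nlinarith

lemma mem_of_lt_of_lt_of_add_lt_one (hK : IsInterClosed K) (hc : IsClosed K) {σ τ X Y : ℝ}
    (h₀ : (0, 0) ∈ K) (h₁ : (1, 0) ∈ K) (h₂ : (0, 1) ∈ K) (hd : (σ, τ) ∈ K) (hσ : 0 < σ)
    (hτ : 0 < τ) (hX : σ < X) (hY : τ < Y) (hXY : X + Y < 1) : (X, Y) ∈ K := by
  have hX₀ : 0 < X := hσ.trans hX
  have hY₀ : 0 < Y := hτ.trans hY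
  have hX' : 0 < 1 - X := by linarith
  have hY' : 0 < 1 - Y := by linarith
  have hx : (X / (1 - Y), 0) ∈ K := by
    refine hK.segment_mem hc h₀ h₁ h₂ hd hσ hτ (by linarith) ⟨?_, ?_⟩
    · gcongr
    · rw [div_le_one hY']
      linarith
  have hy : (0, Y / (1 - X)) ∈ K := by
    refine hK.preimage_swap.segment_mem (hc.preimage continuous_swap) h₀ h₂ h₁ hd hτ hσ
      (by linarith) ⟨?_, ?_⟩
    · gcongr
    · rw [div_le_one hX']
      linarith
  refine hK.mem hx h₂ hy h₁ ?_ ?_ ?_ <;> simp only [cross, Prod.mk_sub_mk]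
  · have heq : (0 - X / (1 - Y)) * (0 - Y / (1 - X)) - (1 - 0) * (1 - 0) =
        -((1 - X - Y) / ((1 - X) * (1 - Y))) := by
      field_simp
      ring
    rw [heq]
    have : 0 < 1 - X - Y := by linarith
    exact (neg_neg_of_pos (by positivity)).ne
  · field_simp
    ring
  · field_simp
    ring

lemma eq_univ_of_mem_standardTriangle (hK : IsInterClosed K) (hc : IsClosed K) {σ τ : ℝ}
    (h₀ : (0, 0) ∈ K) (h₁ : (1, 0) ∈ K) (h₂ : (0, 1) ∈ K) (hd : (σ, τ) ∈ K) (hσ : 0 < σ)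
    (hτ : 0 < τ) (hστ : σ + τ < 1) : K = univ := by
  let O : Set (ℝ × ℝ) := {x | σ < x.1 ∧ τ < x.2 ∧ x.1 + x.2 < 1}
  have hO : IsOpen O :=
    (isOpen_lt continuous_const continuous_fst).inter
      ((isOpen_lt continuous_const continuous_snd).inter
        (isOpen_lt (continuous_fst.add continuous_snd) continuous_const))
  have hOK : O ⊆ K := fun x hx =>
    hK.mem_of_lt_of_lt_of_add_lt_one hc h₀ h₁ h₂ hd hσ hτ hx.1 hx.2.1 hx.2.2
  let δ : ℝ := (1 - σ - τ) / 3
  have hmem : (σ + δ, τ + δ) ∈ O := by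
    refine ⟨?_, ?_, ?_⟩ <;> simp only [δ] <;> linarith
  exact hK.eq_univ_of_interior_nonempty ⟨_, interior_maximal hOK hO hmem⟩

lemma eq_univ_of_mem_triangle (hK : IsInterClosed K) (hc : IsClosed K) {a b c d : ℝ × ℝ}
    {α β γ : ℝ} (ha : a ∈ K) (hb : b ∈ K) (hc' : c ∈ K) (hd : d ∈ K)
    (habc : cross (b - a) (c - a) ≠ 0) (hα : 0 < α) (hβ : 0 < β) (hγ : 0 < γ)
    (hbary : α • (a - d) + β • (b - d) + γ • (c - d) = 0) : K = univ := by
  have hsum : α + β + γ ≠ 0 := by positivity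
  have hframe : frame a (b - a) (c - a) (β / (α + β + γ), γ / (α + β + γ)) = d := by
    obtain ⟨h₁, h₂⟩ := Prod.ext_iff.1 hbary
    apply Prod.ext <;>
      simp only [frame, Prod.fst_add, Prod.snd_add, Prod.fst_sub, Prod.snd_sub, Prod.smul_fst,
        Prod.smul_snd, smul_eq_mul, Prod.fst_zero, Prod.snd_zero] at h₁ h₂ ⊢ <;>
      field_simp
    · linear_combination h₁
    · linear_combination h₂
  refine (frame_surjective a habc).preimage_injective ?_
  refine (hK.preimage_frame habc).eq_univ_of_mem_standardTriangle
    (hc.preimage (continuous_frame _ _ _)) (σ := β / (α + β + γ)) (τ := γ / (α + β + γ))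
    ?_ ?_ ?_ ?_ (by positivity) (by positivity) ?_
  · simpa [frame] using ha
  · simpa [frame] using hb
  · simpa [frame] using hc'
  · rwa [mem_preimage, hframe]
  · rw [← add_div, div_lt_one (by positivity)]
    linarith

lemma eq_univ_of_mul_pos_of_mul_neg (hK : IsInterClosed K) (hc : IsClosed K) {p q r s : ℝ}
    (hp : (p, 0) ∈ K) (hq : (q, 0) ∈ K) (hr : (0, r) ∈ K) (hs : (0, s) ∈ K) (hne : p ≠ q)
    (hpq : 0 < p * q) (hrs : r * s < 0) : K = univ := by
  wlog hlt : q * q < p * q generalizing p q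
  · exact this hq hp hne.symm (by linarith) (mul_self_lt_mul_of_mul_le hne hpq (not_lt.1 hlt))
  have hr₀ : r ≠ 0 := left_ne_zero_of_mul hrs.ne
  have hp₀ : p ≠ 0 := left_ne_zero_of_mul hpq.ne'
  have hq₀ : q ≠ 0 := right_ne_zero_of_mul hpq.ne'
  have hrs' : 0 < r * (r - s) := by nlinarith [mul_self_pos.2 hr₀]
  refine hK.eq_univ_of_mem_triangle hc (α := -(r * s)) (β := r * r)
    (γ := q * q * (r * (r - s)) / (p * q - q * q)) hr hs hp hq ?_ (neg_pos.2 hrs)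
    (mul_self_pos.2 hr₀) (div_pos (mul_pos (mul_self_pos.2 hq₀) hrs') (sub_pos.2 hlt)) ?_
  · have heq : cross ((0, s) - (0, r)) ((p, 0) - (0, r)) = (r - s) * p := by
      simp only [cross, Prod.mk_sub_mk]
      ring
    rw [heq]
    exact mul_ne_zero (right_ne_zero_of_mul hrs'.ne') hp₀
  · ext <;> simp only [Prod.mk_sub_mk, Prod.smul_mk, Prod.mk_add_mk, smul_eq_mul, Prod.fst_zero,
      Prod.snd_zero]
    · field_simp [(sub_pos.2 hlt).ne']
      ring
    · ring

lemma eq_univ_of_mul_pos_of_mul_pos (hK : IsInterClosed K) (hc : IsClosed K) {p q r s : ℝ}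
    (h₀ : (0, 0) ∈ K) (hp : (p, 0) ∈ K) (hq : (q, 0) ∈ K) (hr : (0, r) ∈ K) (hs : (0, s) ∈ K)
    (hpne : p ≠ q) (hrne : r ≠ s) (hpq : 0 < p * q) (hrs : 0 < r * s) : K = univ := by
  wlog hlt : q * q < p * q generalizing p q
  · exact this hq hp hpne.symm (by linarith) (mul_self_lt_mul_of_mul_le hpne hpq (not_lt.1 hlt))
  wlog hlt' : s * s < r * s generalizing r s
  · exact this hs hr hrne.symm (by linarith) (mul_self_lt_mul_of_mul_le hrne hrs (not_lt.1 hlt'))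
  have hq₀ : 0 < q * q := mul_self_pos.2 (right_ne_zero_of_mul hpq.ne')
  have hs₀ : 0 < s * s := mul_self_pos.2 (right_ne_zero_of_mul hrs.ne')
  have hdet : p * r - q * s ≠ 0 := by
    intro h
    have heq : q * q * (s * s) = p * q * (r * s) := by linear_combination -q * s * h
    exact (mul_lt_mul'' hlt hlt' hq₀.le hs₀.le).ne heq
  have hz : (p * q * (r - s) / (p * r - q * s), r * s * (p - q) / (p * r - q * s)) ∈ K := by
    refine hK.mem hp hs hq hr ?_ ?_ ?_ <;> simp only [cross, Prod.mk_sub_mk]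
    · contrapose! hdet
      linear_combination -hdet
    · linear_combination -p * s * mul_inv_cancel₀ hdet
    · linear_combination -q * r * mul_inv_cancel₀ hdet
  refine hK.eq_univ_of_mem_triangle hc (α := (p * q - q * q) * (r * s - s * s))
    (β := q * q * (r * s - s * s)) (γ := s * s * (p * q - q * q)) h₀ hp hr hz ?_
    (mul_pos (sub_pos.2 hlt) (sub_pos.2 hlt')) (mul_pos hq₀ (sub_pos.2 hlt'))
    (mul_pos hs₀ (sub_pos.2 hlt)) ?_
  · simpa [cross] using ⟨left_ne_zero_of_mul hpq.ne', left_ne_zero_of_mul hrs.ne'⟩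
  · ext <;> simp only [Prod.mk_sub_mk, Prod.smul_mk, Prod.mk_add_mk, smul_eq_mul, Prod.fst_zero,
      Prod.snd_zero] <;> field_simp <;> ring

lemma eq_univ_of_mem_opposite_quadrant (hK : IsInterClosed K) (hc : IsClosed K) {p r X Y : ℝ}
    (h₀ : (0, 0) ∈ K) (hp : (p, 0) ∈ K) (hr : (0, r) ∈ K) (hx : (X, Y) ∈ K) (hpX : p * X < 0)
    (hrY : r * Y < 0) : K = univ := by
  have hp₀ : p ≠ 0 := left_ne_zero_of_mul hpX.ne
  have hr₀ : r ≠ 0 := left_ne_zero_of_mul hrY.ne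
  refine hK.eq_univ_of_mem_triangle hc (α := 1) (β := -(p * X) / p ^ 2) (γ := -(r * Y) / r ^ 2)
    hx hp hr h₀ (fun h => ?_) one_pos (div_pos (neg_pos.2 hpX) (by positivity))
    (div_pos (neg_pos.2 hrY) (by positivity)) ?_
  · have heq : p * r * cross ((p, 0) - (X, Y)) ((0, r) - (X, Y)) =
        p ^ 2 * r ^ 2 + p ^ 2 * -(r * Y) + r ^ 2 * -(p * X) := by
      simp only [cross, Prod.mk_sub_mk]
      ring
    have hpos : 0 < p ^ 2 * r ^ 2 + p ^ 2 * -(r * Y) + r ^ 2 * -(p * X) := by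
      have := neg_pos.2 hpX
      have := neg_pos.2 hrY
      positivity
    rw [← heq, h, mul_zero] at hpos
    exact hpos.false
  · ext <;> simp only [Prod.mk_sub_mk, Prod.smul_mk, Prod.mk_add_mk, smul_eq_mul, Prod.fst_zero,
      Prod.snd_zero] <;> field_simp <;> ring

lemma eq_univ_of_mul_neg_of_mul_neg (hK : IsInterClosed K) (hc : IsClosed K) (hinf : K.Infinite)
    {p q r s : ℝ} (h₀ : (0, 0) ∈ K) (hp : (p, 0) ∈ K) (hq : (q, 0) ∈ K) (hr : (0, r) ∈ K)
    (hs : (0, s) ∈ K) (hpq : p * q < 0) (hrs : r * s < 0) : K = univ := by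
  obtain ⟨⟨X, Y⟩, hx, hnew⟩ := hinf.exists_notMem_finite
    (toFinite {((0 : ℝ), (0 : ℝ)), (p, 0), (q, 0), (0, r), (0, s)})
  simp only [mem_insert_iff, mem_singleton_iff, Prod.mk.injEq, not_or, not_and'] at hnew
  obtain ⟨hx₀, hxp, hxq, hxr, hxs⟩ := hnew
  have hside : ∀ {u v t : ℝ}, u * v < 0 → t ≠ 0 →
      u * t < 0 ∧ 0 < v * t ∨ 0 < u * t ∧ v * t < 0 := by
    intro u v t huv ht
    have := mul_neg_of_neg_of_pos huv (mul_self_pos.2 ht)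
    exact mul_neg_iff.1 (by linarith : u * t * (v * t) < 0) |>.symm
  rcases eq_or_ne Y 0 with rfl | hY
  · rcases hside hpq (hx₀ rfl) with ⟨-, h⟩ | ⟨h, -⟩
    · exact hK.eq_univ_of_mul_pos_of_mul_neg hc hq hx hr hs (Ne.symm (hxq rfl)) h hrs
    · exact hK.eq_univ_of_mul_pos_of_mul_neg hc hp hx hr hs (Ne.symm (hxp rfl)) h hrs
  rcases eq_or_ne X 0 with rfl | hX
  · refine Prod.swap_surjective.preimage_injective ?_
    have hK' := hK.preimage_swap
    have hc' : IsClosed (Prod.swap ⁻¹' K) := hc.preimage continuous_swap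
    rcases hside hrs hY with ⟨-, h⟩ | ⟨h, -⟩
    · exact hK'.eq_univ_of_mul_pos_of_mul_neg hc' hs hx hp hq (fun h => hxs h.symm rfl) h hpq
    · exact hK'.eq_univ_of_mul_pos_of_mul_neg hc' hr hx hp hq (fun h => hxr h.symm rfl) h hpq
  obtain ⟨u, hu, hu'⟩ : ∃ u, (u, 0) ∈ K ∧ u * X < 0 :=
    (hside hpq hX).elim (fun h => ⟨p, hp, h.1⟩) (fun h => ⟨q, hq, h.2⟩)
  obtain ⟨v, hv, hv'⟩ : ∃ v, (0, v) ∈ K ∧ v * Y < 0 :=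
    (hside hrs hY).elim (fun h => ⟨r, hr, h.1⟩) (fun h => ⟨s, hs, h.2⟩)
  exact hK.eq_univ_of_mem_opposite_quadrant hc h₀ hu hv hx hu' hv'

lemma eq_univ_of_mul_ne_zero (hK : IsInterClosed K) (hc : IsClosed K) (hinf : K.Infinite)
    {p q r s : ℝ} (h₀ : (0, 0) ∈ K) (hp : (p, 0) ∈ K) (hq : (q, 0) ∈ K) (hr : (0, r) ∈ K)
    (hs : (0, s) ∈ K) (hpne : p ≠ q) (hrne : r ≠ s) (hpq : p * q ≠ 0) (hrs : r * s ≠ 0) :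
    K = univ := by
  rcases hpq.lt_or_gt with hpq | hpq <;> rcases hrs.lt_or_gt with hrs | hrs
  · exact hK.eq_univ_of_mul_neg_of_mul_neg hc hinf h₀ hp hq hr hs hpq hrs
  · exact Prod.swap_surjective.preimage_injective <|
      hK.preimage_swap.eq_univ_of_mul_pos_of_mul_neg (hc.preimage continuous_swap)
        hr hs hp hq hrne hrs hpq
  · exact hK.eq_univ_of_mul_pos_of_mul_neg hc hp hq hr hs hpne hpq hrs
  · exact hK.eq_univ_of_mul_pos_of_mul_pos hc h₀ hp hq hr hs hpne hrne hpq hrs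

lemma eq_univ_of_mem_interT_diff {S : Set (ℝ × ℝ)} {m : ℝ × ℝ} (hK : IsInterClosed K)
    (hc : IsClosed K) (hinf : K.Infinite) (hSK : S ⊆ K) (hm : m ∈ interT S) (hmS : m ∉ S) :
    K = univ := by
  have hmK : m ∈ K := hK (interT_mono hSK hm)
  obtain ⟨a, ha, b, hb, c, hc', d, hd, h, hab, hcd⟩ := mem_interT_iff.1 hm
  obtain ⟨β, rfl⟩ := exists_eq_add_smul_of_cross_eq_zero (ne_of_mem_of_not_mem ha hmS) hab
  obtain ⟨δ, rfl⟩ := exists_eq_add_smul_of_cross_eq_zero (ne_of_mem_of_not_mem hc' hmS) hcd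
  have heq : cross (m + β • (a - m) - a) (m + δ • (c - m) - c) =
      (1 - β) * (1 - δ) * cross (a - m) (c - m) := by
    simp only [cross, Prod.fst_add, Prod.snd_add, Prod.fst_sub, Prod.snd_sub, Prod.smul_fst,
      Prod.smul_snd, smul_eq_mul]
    ring
  rw [heq] at h
  obtain ⟨⟨hβ, hδ⟩, hcross⟩ := (mul_ne_zero_iff.1 h).imp_left mul_ne_zero_iff.1
  have hne : ∀ {t : ℝ} {u : ℝ × ℝ}, m + t • u ∈ S → 1 * t ≠ 0 := by
    rintro t u hu ht
    rw [one_mul] at ht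
    exact hmS (by simpa [ht] using hu)
  have hsurj := frame_surjective m hcross
  refine hsurj.preimage_injective <|
    (hK.preimage_frame hcross).eq_univ_of_mul_ne_zero (hc.preimage (continuous_frame _ _ _))
      (hinf.preimage (by simp [hsurj.range_eq])) (p := 1) (q := β) (r := 1) (s := δ)
      ?_ ?_ ?_ ?_ ?_ (sub_ne_zero.1 hβ) (sub_ne_zero.1 hδ) (hne hb) (hne hd)
  · simpa [frame] using hmK
  · simpa [frame] using hSK ha
  · simpa [frame] using hSK hb
  · simpa [frame] using hSK hc'
  · simpa [frame] using hSK hd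

end IsInterClosed

lemma dense_iUnion_iterate_of_forall_ne {S : Set (ℝ × ℝ)}
    (h : ∀ n : ℕ, interT^[n + 1] S ≠ interT^[n] S) : Dense (⋃ i, interT^[i] S) := by
  have hne : ∀ n, (interT^[n + 1] S).Nonempty := by
    intro n
    rw [nonempty_iff_ne_empty]
    intro hn
    have hn' : interT^[n + 2] S = ∅ := by rw [Function.iterate_succ_apply', hn, interT_empty]
    exact h (n + 1) (hn'.trans hn.symm)
  have hssub : ∀ n, interT^[n] S ⊂ interT^[n + 1] S := by
    intro n
    refine LE.le.ssubset_of_ne ?_ (h n).symm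
    have hn := hne n
    rw [Function.iterate_succ_apply'] at hn ⊢
    exact subset_interT_of_nonempty hn
  have hmono : StrictMono fun n => interT^[n] S := strictMono_nat_of_lt_succ hssub
  have hinf : (⋃ i, interT^[i] S).Infinite := fun hfin =>
    infinite_of_injective_forall_mem hmono.injective
      (fun n => subset_iUnion (fun i => interT^[i] S) n) hfin.finite_subsets
  obtain ⟨m, hm, hmS⟩ := exists_of_ssubset (hssub 0)
  rw [dense_iff_closure_eq]
  exact (IsInterClosed.iUnion_iterate hmono.monotone).closure.eq_univ_of_mem_interT_diff
    isClosed_closure (hinf.mono subset_closure)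
    ((subset_iUnion (fun i => interT^[i] S) 0).trans subset_closure) hm hmS

lemma finite_iterate_interT {S : Set (ℝ × ℝ)} (hS : S.Finite) (n : ℕ) :
    (interT^[n] S).Finite := by
  induction n with
  | zero => exact hS
  | succ n ih =>
    rw [Function.iterate_succ_apply']
    exact interT_finite ih

lemma finite_iUnion_iterate_interT {S : Set (ℝ × ℝ)} (hS : S.Finite) {n : ℕ}
    (h : interT^[n + 1] S = interT^[n] S) : (⋃ i, interT^[i] S).Finite := by
  rw [Function.iterate_succ_apply'] at h
  refine ((finite_Iic n).biUnion fun i _ => finite_iterate_interT hS i).subset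
    (iUnion_subset fun i => ?_)
  rcases le_total i n with hi | hi
  · exact subset_biUnion_of_mem (u := fun i => interT^[i] S) hi
  · obtain ⟨k, rfl⟩ := Nat.exists_eq_add_of_le' hi
    rw [Function.iterate_add_apply, Function.iterate_fixed h k]
    exact subset_biUnion_of_mem (u := fun i => interT^[i] S) (mem_Iic.2 le_rfl)

/-- A finite set `S ⊆ ℝ²` has infinite order under `T` (the iterates never stabilize)
if and only if `⋃ i, Tⁱ(S)` is dense in the plane. -/
theorem infinite_order_iff_dense (S : Set (ℝ × ℝ)) (hS : S.Finite) :
    (∀ n : ℕ, interT^[n + 1] S ≠ interT^[n] S) ↔ Dense (⋃ i, interT^[i] S) := by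
  refine ⟨dense_iUnion_iterate_of_forall_ne, fun hdense n hn => ?_⟩
  have hfin := finite_iUnion_iterate_interT hS hn
  rw [← hfin.isClosed.closure_eq, hdense.closure_eq] at hfin
  exact infinite_univ hfin
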